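/- Fix r > 0 and γ > r. Let q₀ = (4/3)√(2r/(γ(γ−r))) and define E(λ) = r − ∫_0^r exp(−λ Q_γ(γ−c)) dc where Q_γ(u) = 2∫_{γ−r}^u arccos((w²+γ²−r²)/(2wγ)) dw. Then r − E(λ) ~ Γ(5/3)/(λ q₀)^{2/3} as λ → ∞; that is, the expected single-hop advancement satisfies 𝔼(C) = r − Γ(5/3)(λ q₀)^{−2/3} + o(λ^{−2/3}). -/

import Mathlib

/-!
Put `t = w - (γ - r)`. By the law of cosines the half-angle `θ` at distance `w` satisfies
`1 - cos θ ~ r t / (γ (γ - r))`, so `θ ~ √(2 r t / (γ (γ - r)))` as `t → 0⁺`, and integrating gives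
`Q (γ - r + t) ~ q₀ t ^ (3/2)`.
Laplace's method at the endpoint then applies: the substitution `t = s / λ ^ (2/3)` turns
`∫₀ʳ exp (-λ Q (γ - r + t)) dt` into `λ ^ (-2/3)` times an integral that converges, by dominated
convergence, to `∫₀^∞ exp (-q₀ s ^ (3/2)) ds = Γ(5/3) q₀ ^ (-2/3)`.
-/

open Asymptotics Filter MeasureTheory Real Set Topology

section PrimitiveAsymptotics

variable {E : Type*} [NormedAddCommGroup E] [NormedSpace ℝ E] {μ : Measure ℝ} {a : ℝ}

lemma isLittleO_intervalIntegral_nhdsGT {f : ℝ → E} {g : ℝ → ℝ} (hfg : f =o[𝓝[>] a] g)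
    (hg₀ : ∀ᶠ x in 𝓝[>] a, 0 ≤ g x) (hg : ∀ᶠ x in 𝓝[>] a, IntervalIntegrable g μ a x) :
    (fun x => ∫ t in a..x, f t ∂μ) =o[𝓝[>] a] fun x => ∫ t in a..x, g t ∂μ := by
  refine isLittleO_iff.2 fun ε hε => ?_
  obtain ⟨b, hab, hb⟩ := (nhdsGT_basis a).eventually_iff.1 ((hfg.bound hε).and hg₀)
  filter_upwards [hg, Ioo_mem_nhdsGT hab] with x hgx hx
  have hbound : ∀ t ∈ Ioc a x, ‖f t‖ ≤ ε * g t := fun t ht => by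
    obtain ⟨hft, hgt⟩ := hb ⟨ht.1, ht.2.trans_lt hx.2⟩
    rwa [norm_of_nonneg hgt] at hft
  calc ‖∫ t in a..x, f t ∂μ‖ ≤ ∫ t in a..x, ε * g t ∂μ :=
        intervalIntegral.norm_integral_le_of_norm_le hx.1.le (ae_of_all _ hbound)
          (hgx.const_mul ε)
    _ = ε * ∫ t in a..x, g t ∂μ := intervalIntegral.integral_const_mul _ _
    _ ≤ ε * ‖∫ t in a..x, g t ∂μ‖ := by gcongr; exact le_norm_self _

lemma isEquivalent_intervalIntegral_nhdsGT {f g : ℝ → ℝ} (hfg : f ~[𝓝[>] a] g)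
    (hg₀ : ∀ᶠ x in 𝓝[>] a, 0 ≤ g x) (hf : ∀ᶠ x in 𝓝[>] a, IntervalIntegrable f μ a x)
    (hg : ∀ᶠ x in 𝓝[>] a, IntervalIntegrable g μ a x) :
    (fun x => ∫ t in a..x, f t ∂μ) ~[𝓝[>] a] fun x => ∫ t in a..x, g t ∂μ := by
  refine (isLittleO_intervalIntegral_nhdsGT hfg.isLittleO hg₀ hg).congr' ?_ .rfl
  filter_upwards [hf, hg] with x hfx hgx
  exact intervalIntegral.integral_sub hfx hgx

-- For `t < 0` both sides vanish: `t ^ (3 / 2)` is then `|t| ^ (3 / 2) * cos (3 π / 2)`.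
lemma integral_sqrt (t : ℝ) : ∫ s in 0..t, √s = 2 / 3 * t ^ (3 / 2 : ℝ) := by
  simp only [sqrt_eq_rpow]
  rw [integral_rpow (.inl (by norm_num))]
  norm_num
  ring

end PrimitiveAsymptotics

section Laplace

variable {q : ℝ → ℝ} {a p r : ℝ}

lemma exists_pos_forall_mul_rpow_le_of_isEquivalent (ha : 0 < a) (hq : ContinuousOn q (Ioc 0 r))
    (hpos : ∀ t ∈ Ioc 0 r, 0 < q t) (hlim : q ~[𝓝[>] 0] fun t => a * t ^ p) :
    ∃ c > 0, ∀ t ∈ Ioc 0 r, c * t ^ p ≤ q t := by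
  have hratio : Tendsto (fun t => q t / t ^ p) (𝓝[>] 0) (𝓝 a) := by
    refine (isEquivalent_const_iff_tendsto ha.ne').1 ((hlim.div .refl).congr_right ?_)
    filter_upwards [self_mem_nhdsWithin] with t (ht : 0 < t)
    exact mul_div_cancel_right₀ a (rpow_pos_of_pos ht p).ne'
  let ratio : ℝ → ℝ := Function.update (fun t => q t / t ^ p) 0 a
  have ratio_of_pos {t : ℝ} (ht : 0 < t) : ratio t = q t / t ^ p :=
    Function.update_of_ne ht.ne' _ _
  have hIcc : Icc 0 r \ {0} = Ioc 0 r := Icc_sdiff_left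
  have hcont : ContinuousOn ratio (Icc 0 r) := by
    refine continuousOn_update_iff.2 ⟨?_, fun _ => ?_⟩
    · rw [hIcc]
      exact hq.div (continuousOn_id.rpow_const fun t ht => .inl ht.1.ne')
        fun t ht => (rpow_pos_of_pos ht.1 p).ne'
    · rw [hIcc]
      exact hratio.mono_left (nhdsWithin_mono _ Ioc_subset_Ioi_self)
  have hratio_pos : ∀ t ∈ Icc 0 r, 0 < ratio t := by
    rintro t ⟨ht₀, htr⟩
    rcases ht₀.eq_or_lt with rfl | ht
    · simpa only [ratio, Function.update_self] using ha
    · rw [ratio_of_pos ht]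
      exact div_pos (hpos t ⟨ht, htr⟩) (rpow_pos_of_pos ht p)
  obtain ⟨c, hc, hcr⟩ := isCompact_Icc.exists_forall_le' hcont hratio_pos
  refine ⟨c, hc, fun t ht => (le_div_iff₀ (rpow_pos_of_pos ht.1 p)).1 ?_⟩
  simpa only [ratio_of_pos ht.1] using hcr t (Ioc_subset_Icc_self ht)

lemma rpow_mul_div_rpow {R s : ℝ} (hR : 0 < R) (hs : 0 ≤ s) (p : ℝ) :
    R ^ p * (s / R) ^ p = s ^ p := by
  rw [← mul_rpow hR.le (by positivity), mul_div_cancel₀ s hR.ne']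

lemma tendsto_rpow_mul_comp_div_atTop (hlim : q ~[𝓝[>] 0] fun t => a * t ^ p) {s : ℝ}
    (hs : 0 < s) : Tendsto (fun R => R ^ p * q (s / R)) atTop (𝓝 (a * s ^ p)) := by
  have hdiv : Tendsto (fun R => s / R) atTop (𝓝[>] 0) := by
    refine tendsto_nhdsWithin_iff.2 ⟨tendsto_id.const_div_atTop s, ?_⟩
    filter_upwards [eventually_gt_atTop 0] with R hR using div_pos hs hR
  refine (IsEquivalent.congr_right ((IsEquivalent.refl (u := fun R : ℝ => R ^ p)).mul
    (hlim.comp_tendsto hdiv)) ?_).tendsto_const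
  filter_upwards [eventually_gt_atTop 0] with R hR
  calc R ^ p * (a * (s / R) ^ p) = a * (R ^ p * (s / R) ^ p) := by ring
    _ = a * s ^ p := by rw [rpow_mul_div_rpow hR hs.le]

lemma smul_integral_eq_integral_indicator_comp_div {E : Type*} [NormedAddCommGroup E]
    [NormedSpace ℝ E] (f : ℝ → E) (hr : 0 ≤ r) {R : ℝ} (hR : 0 < R) :
    R • ∫ t in 0..r, f t = ∫ s in Ioi 0, (Ioc 0 (r * R)).indicator (fun s => f (s / R)) s := by
  have hscale := intervalIntegral.integral_comp_div (a := 0) (b := r * R) f hR.ne'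
  rw [zero_div, mul_div_cancel_right₀ r hR.ne'] at hscale
  rw [← hscale, intervalIntegral.integral_of_le (by positivity),
    setIntegral_indicator measurableSet_Ioc, inter_eq_right.2 Ioc_subset_Ioi_self]

lemma div_mem_Ioc_zero {R s : ℝ} (hR : 0 < R) (hs : s ∈ Ioc 0 (r * R)) : s / R ∈ Ioc 0 r :=
  ⟨div_pos hs.1 hR, (div_le_iff₀ hR).2 hs.2⟩

lemma mul_rpow_le_rpow_mul_comp_div {c R s : ℝ} (hcq : ∀ t ∈ Ioc 0 r, c * t ^ p ≤ q t)
    (hR : 0 < R) (hs : s ∈ Ioc 0 (r * R)) : c * s ^ p ≤ R ^ p * q (s / R) :=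
  calc c * s ^ p = R ^ p * (c * (s / R) ^ p) := by rw [← rpow_mul_div_rpow hR hs.1.le p]; ring
    _ ≤ R ^ p * q (s / R) := by gcongr; exact hcq _ (div_mem_Ioc_zero hR hs)

lemma tendsto_mul_integral_exp_neg_rpow_mul (hr : 0 < r) (hp : 0 < p) (ha : 0 < a)
    (hq : ContinuousOn q (Ioc 0 r)) (hpos : ∀ t ∈ Ioc 0 r, 0 < q t)
    (hlim : q ~[𝓝[>] 0] fun t => a * t ^ p) :
    Tendsto (fun R => R * ∫ t in 0..r, exp (-(R ^ p * q t))) atTop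
      (𝓝 (∫ s in Ioi 0, exp (-a * s ^ p))) := by
  obtain ⟨c, hc, hcq⟩ := exists_pos_forall_mul_rpow_le_of_isEquivalent ha hq hpos hlim
  let F (R : ℝ) : ℝ → ℝ := (Ioc 0 (r * R)).indicator fun s => exp (-(R ^ p * q (s / R)))
  have hmeas : ∀ᶠ R in atTop, AEStronglyMeasurable (F R) (volume.restrict (Ioi 0)) := by
    filter_upwards [eventually_gt_atTop 0] with R hR
    have hqR : ContinuousOn (fun s => q (s / R)) (Ioc 0 (r * R)) :=
      hq.comp (by fun_prop) fun s hs => div_mem_Ioc_zero hR hs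
    exact ((aestronglyMeasurable_indicator_iff measurableSet_Ioc).2
      ((continuousOn_const.mul hqR).neg.rexp.aestronglyMeasurable measurableSet_Ioc)).restrict
  have hbound : ∀ᶠ R in atTop, ∀ᵐ s ∂volume.restrict (Ioi 0), ‖F R s‖ ≤ exp (-c * s ^ p) := by
    filter_upwards [eventually_gt_atTop 0] with R hR
    refine ae_of_all _ fun s => ?_
    by_cases hs : s ∈ Ioc 0 (r * R)
    · simp only [F, indicator_of_mem hs, norm_of_nonneg (exp_nonneg _)]
      rw [neg_mul, exp_le_exp, neg_le_neg_iff]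
      exact mul_rpow_le_rpow_mul_comp_div hcq hR hs
    · simp only [F, indicator_of_notMem hs, norm_zero, exp_nonneg]
  have hint : IntegrableOn (fun s => exp (-c * s ^ p)) (Ioi 0) := by
    simpa only [rpow_zero, one_mul] using
      integrableOn_rpow_mul_exp_neg_mul_rpow neg_one_lt_zero hp hc
  have hpointwise : ∀ᵐ s ∂volume.restrict (Ioi 0),
      Tendsto (F · s) atTop (𝓝 (exp (-a * s ^ p))) := by
    filter_upwards [ae_restrict_mem measurableSet_Ioi] with s (hs : 0 < s)
    rw [neg_mul]
    refine (tendsto_rpow_mul_comp_div_atTop hlim hs).neg.rexp.congr' ?_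
    filter_upwards [(tendsto_id.const_mul_atTop hr).eventually_ge_atTop s] with R hR
    have hsR : s ∈ Ioc 0 (r * R) := ⟨hs, hR⟩
    simp only [F, indicator_of_mem hsR]
  refine (tendsto_integral_filter_of_dominated_convergence _ hmeas hbound hint hpointwise).congr' ?_
  filter_upwards [eventually_gt_atTop 0] with R hR
  exact (smul_integral_eq_integral_indicator_comp_div
    (fun t => exp (-(R ^ p * q t))) hr.le hR).symm

theorem isEquivalent_integral_exp_neg_mul (hr : 0 < r) (hp : 0 < p) (ha : 0 < a)
    (hq : ContinuousOn q (Ioc 0 r)) (hpos : ∀ t ∈ Ioc 0 r, 0 < q t)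
    (hlim : q ~[𝓝[>] 0] fun t => a * t ^ p) :
    (fun l => ∫ t in 0..r, exp (-(l * q t))) ~[atTop]
      fun l => Gamma (1 / p + 1) / (l * a) ^ (1 / p) := by
  have hscaled := (tendsto_mul_integral_exp_neg_rpow_mul hr hp ha hq hpos hlim).comp
    (tendsto_rpow_atTop (one_div_pos.2 hp))
  rw [integral_exp_neg_mul_rpow hp ha] at hscaled
  have : 0 < Gamma (1 / p + 1) := Gamma_pos_of_pos (by positivity)
  have hequiv := (IsEquivalent.refl (u := fun l : ℝ => (l ^ (1 / p))⁻¹)).mul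
    ((isEquivalent_const_iff_tendsto (by positivity)).2 hscaled)
  refine (hequiv.congr_left ?_).congr_right ?_
  · filter_upwards [eventually_gt_atTop 0] with l hl
    have hpow : (l ^ (1 / p)) ^ p = l := by
      rw [← rpow_mul hl.le, one_div_mul_cancel hp.ne', rpow_one]
    simp only [Pi.mul_apply, Function.comp_apply, hpow]
    exact inv_mul_cancel_left₀ (rpow_pos_of_pos hl _).ne' _
  · filter_upwards [eventually_gt_atTop 0] with l hl
    simp only [Pi.mul_apply, Function.const_apply]
    rw [mul_rpow hl.le ha.le, neg_div, rpow_neg ha.le]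
    field_simp

end Laplace

section Arccos

variable {α : Type*} {l : Filter α} {u v : α → ℝ}

lemma isEquivalent_sqrt (huv : u ~[l] v) (hv : 0 ≤ᶠ[l] v) :
    (fun x => √(u x)) ~[l] fun x => √(v x) := by
  obtain ⟨φ, hφ, huφv⟩ := huv.exists_eq_mul
  refine isEquivalent_iff_exists_eq_mul.2 ⟨fun x => √(φ x), ?_, ?_⟩
  · simpa only [sqrt_one] using hφ.sqrt
  · filter_upwards [huφv, hv] with x hux hvx
    simp only [hux, Pi.mul_apply, sqrt_mul' _ hvx]

lemma isEquivalent_arcsin : arcsin ~[𝓝 0] id := by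
  simpa using! (hasDerivAt_arcsin (x := 0) (by norm_num) (by norm_num)).isLittleO

lemma arccos_one_sub_eq_two_mul_arcsin {x : ℝ} (hx : x ≤ 2) :
    arccos (1 - x) = 2 * arcsin √(x / 2) := by
  rcases le_total x 0 with hx₀ | hx₀
  · rw [arccos_of_one_le (by linarith), sqrt_eq_zero_of_nonpos (by linarith), arcsin_zero, mul_zero]
  have hsin : sin (arccos (1 - x) / 2) = √(x / 2) := by
    rw [sin_half_eq_sqrt (arccos_nonneg _) (by linarith [arccos_le_pi (1 - x), pi_pos]),
      cos_arccos (by linarith) (by linarith), sub_sub_cancel]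
  rw [← hsin, arcsin_sin] <;> linarith [arccos_nonneg (1 - x), arccos_le_pi (1 - x)]

lemma isEquivalent_arccos_one_sub : (fun x => arccos (1 - x)) ~[𝓝 0] fun x => √(2 * x) := by
  have hsqrt : Tendsto (fun x => √(x / 2)) (𝓝 0) (𝓝 0) :=
    Continuous.tendsto' (by fun_prop) _ _ (by norm_num)
  have hequiv := (IsEquivalent.refl (u := fun _ : ℝ => (2 : ℝ))).mul
    (isEquivalent_arcsin.comp_tendsto hsqrt)
  refine (hequiv.congr_left ?_).congr_right (.of_forall fun x => ?_)
  · filter_upwards [Iic_mem_nhds (zero_lt_two' ℝ)] with x hx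
    exact (arccos_one_sub_eq_two_mul_arcsin hx).symm
  · calc 2 * √(x / 2) = √(2 ^ 2 * (x / 2)) := by rw [sqrt_mul (by norm_num), sqrt_sq zero_le_two]
      _ = √(2 * x) := by ring_nf

lemma isEquivalent_arccos_of_one_sub (huv : (fun x => 1 - u x) ~[l] v) (hv : Tendsto v l (𝓝 0))
    (hv₀ : 0 ≤ᶠ[l] v) : (fun x => arccos (u x)) ~[l] fun x => √(2 * v x) := by
  have harccos := isEquivalent_arccos_one_sub.comp_tendsto (huv.symm.tendsto_nhds hv)
  simp only [Function.comp_def, sub_sub_cancel] at harccos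
  refine harccos.trans (isEquivalent_sqrt (IsEquivalent.refl.mul huv) ?_)
  filter_upwards [hv₀] with x hx using mul_nonneg zero_le_two hx

end Arccos

section Hop

variable {r γ w : ℝ}

/-- For a node at distance `γ` from the sink with transmission radius `r`, the angle under which the
sink sees half of the arc of radius `w` about it that lies within range of the node. Meaningful for
`|γ - w| ≤ r`, where the argument of `arccos` lies in `[-1, 1]`. -/
noncomputable def hopAngle (r γ w : ℝ) : ℝ :=
  arccos ((w ^ 2 + γ ^ 2 - r ^ 2) / (2 * w * γ))

/-- The paper's `Q_γ(u)`: the mass, under the density `1 / distance to the sink`, of the region in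
range of the node and at distance at most `u` from the sink. The polar Jacobian `w` cancels the
density, which leaves the arc angle `2 * hopAngle r γ w` as integrand. -/
noncomputable def hopMass (r γ u : ℝ) : ℝ :=
  2 * ∫ w in (γ - r)..u, hopAngle r γ w

lemma one_sub_law_of_cosines (r : ℝ) (hw : w ≠ 0) (hγ : γ ≠ 0) :
    1 - (w ^ 2 + γ ^ 2 - r ^ 2) / (2 * w * γ) = (r ^ 2 - (γ - w) ^ 2) / (2 * w * γ) := by
  field_simp
  ring

lemma hopAngle_pos (hw : 0 < w) (hγ : 0 < γ) (h : |γ - w| < r) : 0 < hopAngle r γ w := by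
  have hsq : (γ - w) ^ 2 < r ^ 2 := sq_lt_sq.2 (h.trans_le (le_abs_self r))
  rw [hopAngle, arccos_pos, ← sub_pos, one_sub_law_of_cosines r hw.ne' hγ.ne']
  exact div_pos (sub_pos.2 hsq) (by positivity)

lemma intervalIntegrable_hopAngle (r γ a b : ℝ) :
    IntervalIntegrable (hopAngle r γ) volume a b := by
  have hmeas : Measurable (hopAngle r γ) := continuous_arccos.measurable.comp (by fun_prop)
  refine (intervalIntegrable_const (c := π)).mono_fun hmeas.aestronglyMeasurable
    (.of_forall fun w => ?_)
  simpa only [hopAngle, norm_of_nonneg (arccos_nonneg _), norm_of_nonneg pi_nonneg]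
    using arccos_le_pi _

lemma isEquivalent_one_sub_law_of_cosines (hr : 0 < r) (hγ : r < γ) :
    (fun t => 1 - ((γ - r + t) ^ 2 + γ ^ 2 - r ^ 2) / (2 * (γ - r + t) * γ)) ~[𝓝[>] 0]
      fun t => r / (γ * (γ - r)) * t := by
  have hγ₀ : 0 < γ := hr.trans hγ
  have hd : 0 < γ - r := sub_pos.2 hγ
  let rate (t : ℝ) : ℝ := (2 * r - t) / (2 * (γ - r + t) * γ)
  have hrate : Tendsto rate (𝓝[>] 0) (𝓝 (r / (γ * (γ - r)))) := by
    have hcont : ContinuousAt rate 0 := by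
      refine ContinuousAt.div (by fun_prop) (by fun_prop) ?_
      rw [add_zero]
      positivity
    have hzero : rate 0 = r / (γ * (γ - r)) := by simp only [rate]; field_simp; ring
    exact hzero ▸ hcont.tendsto.mono_left nhdsWithin_le_nhds
  refine (((isEquivalent_const_iff_tendsto (by positivity)).2 hrate).mul
    (IsEquivalent.refl (u := id))).congr_left ?_
  filter_upwards [self_mem_nhdsWithin] with t (ht : 0 < t)
  have hw : γ - r + t ≠ 0 := by positivity
  simp only [Pi.mul_apply, id, rate, one_sub_law_of_cosines r hw hγ₀.ne']
  ring

lemma isEquivalent_hopAngle (hr : 0 < r) (hγ : r < γ) :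
    (fun t => hopAngle r γ (γ - r + t)) ~[𝓝[>] 0] fun t => √(2 * r / (γ * (γ - r))) * √t := by
  have hK : 0 ≤ r / (γ * (γ - r)) :=
    div_nonneg hr.le (mul_nonneg (hr.trans hγ).le (sub_pos.2 hγ).le)
  have hequiv := isEquivalent_arccos_of_one_sub (isEquivalent_one_sub_law_of_cosines hr hγ) ?_ ?_
  · refine hequiv.congr_right (.of_forall fun t => ?_)
    beta_reduce
    rw [← mul_assoc, sqrt_mul (mul_nonneg zero_le_two hK), mul_div_assoc]
  · exact tendsto_nhdsWithin_of_tendsto_nhds (Continuous.tendsto' (by fun_prop) _ _ (mul_zero _))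
  · filter_upwards [self_mem_nhdsWithin] with t (ht : 0 < t) using mul_nonneg hK ht.le

lemma continuous_hopMass (r γ : ℝ) : Continuous (hopMass r γ) :=
  continuous_const.mul
    (intervalIntegral.continuous_primitive (intervalIntegrable_hopAngle r γ) (γ - r))

lemma hopMass_pos (hγ : r < γ) {u : ℝ} (hu : u ∈ Ioc (γ - r) (γ + r)) :
    0 < hopMass r γ u := by
  refine mul_pos two_pos (intervalIntegral.intervalIntegral_pos_of_pos_on
    (intervalIntegrable_hopAngle r γ _ _) (fun w hw => ?_) hu.1)
  refine hopAngle_pos (by linarith [hw.1]) (by linarith [hu.1, hu.2]) (abs_lt.2 ⟨?_, ?_⟩) <;>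
    linarith [hw.1, hw.2, hu.2]

lemma isEquivalent_hopMass (hr : 0 < r) (hγ : r < γ) :
    (fun t => hopMass r γ (γ - r + t)) ~[𝓝[>] 0]
      fun t => 4 / 3 * √(2 * r / (γ * (γ - r))) * t ^ (3 / 2 : ℝ) := by
  have hsqrt : Continuous fun t => √(2 * r / (γ * (γ - r))) * √t := by fun_prop
  have hint (x : ℝ) : IntervalIntegrable (fun t => hopAngle r γ (γ - r + t)) volume 0 x := by
    simpa using (intervalIntegrable_hopAngle r γ (γ - r) (γ - r + x)).comp_add_left (γ - r)
  have hprimitive := isEquivalent_intervalIntegral_nhdsGT (isEquivalent_hopAngle hr hγ)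
    (.of_forall fun t => by positivity) (.of_forall hint)
    (.of_forall fun x => hsqrt.intervalIntegrable 0 x)
  refine (((IsEquivalent.refl (u := fun _ : ℝ => (2 : ℝ))).mul hprimitive).congr_left
    ?_).congr_right ?_
  · refine .of_forall fun t => ?_
    simp only [Pi.mul_apply, hopMass, intervalIntegral.integral_comp_add_left (hopAngle r γ),
      add_zero]
  · refine .of_forall fun t => ?_
    simp only [Pi.mul_apply, intervalIntegral.integral_const_mul, integral_sqrt]
    ring

theorem isEquivalent_integral_exp_neg_mul_hopMass (hr : 0 < r) (hγ : r < γ) :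
    (fun l => ∫ t in 0..r, exp (-(l * hopMass r γ (γ - r + t)))) ~[atTop]
      fun l => Gamma (5 / 3) / (l * (4 / 3 * √(2 * r / (γ * (γ - r))))) ^ (2 / 3 : ℝ) := by
  have hγ₀ : 0 < γ := hr.trans hγ
  have : 0 < γ - r := sub_pos.2 hγ
  have hlaplace := isEquivalent_integral_exp_neg_mul hr (by norm_num) (by positivity)
    ((continuous_hopMass r γ).comp (by fun_prop)).continuousOn
    (fun t ht => hopMass_pos hγ ⟨by linarith [ht.1], by linarith [ht.2]⟩)
    (isEquivalent_hopMass hr hγ)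
  rwa [show 1 / (3 / 2 : ℝ) = 2 / 3 by norm_num, show (2 / 3 + 1 : ℝ) = 5 / 3 by norm_num]
    at hlaplace

end Hop

/-- First hop moment asymptotics (Theorem 5.1, first part): with
q₀ = (4/3)√(2r/(γ(γ−r))) and 𝔼(C)(λ) = r − ∫_0^r e^{−λ Q_γ(γ−c)} dc,
we have r − 𝔼(C)(λ) ~ Γ(5/3)/(λ q₀)^{2/3} as λ → ∞. -/
theorem stmt_8 (r γ : ℝ) (hr : 0 < r) (hγ : r < γ)
    (q₀ : ℝ) (hq₀ : q₀ = (4 / 3) * Real.sqrt (2 * r / (γ * (γ - r))))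
    (Q : ℝ → ℝ)
    (hQ : ∀ u, Q u =
      2 * ∫ w in (γ - r)..u, Real.arccos ((w ^ 2 + γ ^ 2 - r ^ 2) / (2 * w * γ)))
    (E : ℝ → ℝ)
    (hE : ∀ lam, E lam = r - ∫ c in (0 : ℝ)..r, Real.exp (-(lam * Q (γ - c)))) :
    Filter.Tendsto
      (fun lam => (r - E lam) / (Real.Gamma (5 / 3) / (lam * q₀) ^ ((2 : ℝ) / 3)))
      Filter.atTop (nhds 1) := by
  have hE' (lam : ℝ) : r - E lam = ∫ t in 0..r, exp (-(lam * hopMass r γ (γ - r + t))) := by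
    have hreflect := intervalIntegral.integral_comp_sub_left (a := 0) (b := r)
      (fun t => exp (-(lam * hopMass r γ (γ - r + t)))) r
    simp only [sub_add_sub_cancel, sub_self, sub_zero] at hreflect
    rw [hE, sub_sub_cancel, ← hreflect, show Q = hopMass r γ from funext hQ]
  have hequiv : (fun lam => r - E lam) ~[atTop]
      fun lam => Gamma (5 / 3) / (lam * q₀) ^ ((2 : ℝ) / 3) := by
    simpa only [hE', hq₀] using isEquivalent_integral_exp_neg_mul_hopMass hr hγ
  have hq₀_pos : 0 < q₀ := by
    have : 0 < γ * (γ - r) := mul_pos (hr.trans hγ) (sub_pos.2 hγ)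
    rw [hq₀]
    positivity
  refine (isEquivalent_iff_tendsto_one ?_).1 hequiv
  filter_upwards [eventually_gt_atTop 0] with lam hlam
  have : 0 < Gamma (5 / 3) := Gamma_pos_of_pos (by norm_num)
  positivity
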